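/- In the kernel density setting, for all x, x' ∈ [a, 1−a], | C(x,x') − (1/(2√π)) exp( −(x−x')²/(4h²) ) + h·I(x)·I(x') | ≤ (h/(2πa)) exp( −a²/h² ). -/

import Mathlib

/-!
The substitution `t = (u - x) / h` turns each factor `∫₀¹ φ((u - x)/h) du` into `h I(x)`, so the
product of means in `C(x,x')` cancels `h I(x) I(x')` exactly. Completing the square,
`(u - x)² + (u - x')² = 2 (u - (x + x')/2)² + (x - x')²/2`, identifies the Gaussian term of the
claim with `h⁻¹ ∫ φ((u - x)/h) φ((u - x')/h) du` over the whole line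
(`integral_gaussDensity_mul`). What remains is the mass of this integrand outside `[0, 1]`. For
`u ≤ 0` both `x - u` and `x' - u` are at least `a - u ≥ 0`, and `(a - u)² ≥ a² - 2au`, so the
integrand is at most `(2π)⁻¹ exp(-a²/h²) exp(2au/h²)`, whose integral is
`(2π)⁻¹ exp(-a²/h²) h²/(2a)`. The reflection `u ↦ 1 - u` gives the same bound on `[1, ∞)`.
-/

noncomputable section

/-- The standard Gaussian density φ(t) = (2π)^{−1/2} e^{−t²/2}. -/
def gaussDensity (t : ℝ) : ℝ :=
  Real.exp (-t ^ 2 / 2) / Real.sqrt (2 * Real.pi)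

/-- I(x) = ∫_{−x/h}^{(1−x)/h} φ(t) dt. -/
def Ikde (h x : ℝ) : ℝ :=
  ∫ t in (-(x / h))..((1 - x) / h), gaussDensity t

/-- The scaled covariance function C(x,x') = n h Cov[ĝ(x), ĝ(x')] of the
Gaussian kernel density estimator based on Uniform[0,1] data. -/
def Ckde (h x x' : ℝ) : ℝ :=
  (1 / h) * (∫ u in (0:ℝ)..1, gaussDensity ((u - x) / h) * gaussDensity ((u - x') / h))
    - (1 / h) * (∫ u in (0:ℝ)..1, gaussDensity ((u - x) / h))
        * (∫ u in (0:ℝ)..1, gaussDensity ((u - x') / h))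

end

open MeasureTheory Set

lemma gaussDensity_mul (s t : ℝ) :
    gaussDensity s * gaussDensity t = 1 / (2 * Real.pi) * Real.exp (-(s ^ 2 + t ^ 2) / 2) := by
  have h2 : Real.sqrt (2 * Real.pi) * Real.sqrt (2 * Real.pi) = 2 * Real.pi :=
    Real.mul_self_sqrt (by positivity)
  unfold gaussDensity
  rw [div_mul_div_comm, h2, ← Real.exp_add]
  rw [show -s ^ 2 / 2 + -t ^ 2 / 2 = -(s ^ 2 + t ^ 2) / 2 by ring]
  ring

/-- The product of two scaled Gaussians with the square completed about the midpoint `(x + x')/2`. -/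
lemma gaussDensity_mul_eq {h : ℝ} (hh : 0 < h) (x x' u : ℝ) :
    gaussDensity ((u - x) / h) * gaussDensity ((u - x') / h) =
      1 / (2 * Real.pi) * Real.exp (-(x - x') ^ 2 / (4 * h ^ 2)) *
        Real.exp (-(1 / h ^ 2) * (u - (x + x') / 2) ^ 2) := by
  rw [gaussDensity_mul, mul_assoc, ← Real.exp_add]
  congr 2
  field_simp
  ring

lemma integrable_gaussDensity_mul {h : ℝ} (hh : 0 < h) (x x' : ℝ) :
    Integrable fun u => gaussDensity ((u - x) / h) * gaussDensity ((u - x') / h) := by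
  simp_rw [gaussDensity_mul_eq hh]
  exact ((integrable_exp_neg_mul_sq (b := 1 / h ^ 2) (by positivity)).comp_sub_right
    ((x + x') / 2)).const_mul _

/-- The Gaussian term of the covariance approximation is the integral over the whole line. -/
lemma integral_gaussDensity_mul {h : ℝ} (hh : 0 < h) (x x' : ℝ) :
    ∫ u, gaussDensity ((u - x) / h) * gaussDensity ((u - x') / h) =
      h * (1 / (2 * Real.sqrt Real.pi) * Real.exp (-(x - x') ^ 2 / (4 * h ^ 2))) := by
  simp_rw [gaussDensity_mul_eq hh]
  rw [integral_const_mul,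
    integral_sub_right_eq_self (fun u => Real.exp (-(1 / h ^ 2) * u ^ 2)) ((x + x') / 2),
    integral_gaussian]
  rw [show Real.pi / (1 / h ^ 2) = h ^ 2 * Real.pi by field_simp,
    Real.sqrt_mul (by positivity), Real.sqrt_sq hh.le]
  have hp : Real.sqrt Real.pi ^ 2 = Real.pi := Real.sq_sqrt Real.pi_pos.le
  have hs : 0 < Real.sqrt Real.pi := Real.sqrt_pos.mpr Real.pi_pos
  have h1 : 1 / (2 * Real.pi) * Real.sqrt Real.pi = 1 / (2 * Real.sqrt Real.pi) := by
    rw [div_mul_eq_mul_div, div_eq_div_iff (by positivity) (by positivity)]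
    linear_combination 2 * hp
  linear_combination h * Real.exp (-(x - x') ^ 2 / (4 * h ^ 2)) * h1

lemma gaussDensity_mul_nonneg (s t : ℝ) : 0 ≤ gaussDensity s * gaussDensity t := by
  rw [gaussDensity_mul]; positivity

/-- Mass of the product in the left tail, for centres at distance at least `a` from `0`. -/
lemma tail_le {a h x x' : ℝ} (ha : 0 < a) (hh : 0 < h) (hx : a ≤ x) (hx' : a ≤ x') :
    ∫ u in Iic (0 : ℝ), gaussDensity ((u - x) / h) * gaussDensity ((u - x') / h) ≤
      h ^ 2 / (4 * Real.pi * a) * Real.exp (-a ^ 2 / h ^ 2) := by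
  have hc : 0 < 2 * a / h ^ 2 := by positivity
  calc _ ≤ ∫ u in Iic (0 : ℝ), 1 / (2 * Real.pi) * Real.exp (-a ^ 2 / h ^ 2) *
        Real.exp (2 * a / h ^ 2 * u) := by
        refine setIntegral_mono_on (integrable_gaussDensity_mul hh x x').integrableOn
          ((integrableOn_exp_mul_Iic hc 0).const_mul _) measurableSet_Iic fun u hu => ?_
        have hu : u ≤ 0 := hu
        rw [gaussDensity_mul, mul_assoc, ← Real.exp_add]
        gcongr
        -- tangent-line bound `(a - u)² ≥ a² - 2au`, with `y - u ≥ a - u ≥ 0`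
        have key : ∀ y, a ≤ y → a ^ 2 - 2 * a * u ≤ (u - y) ^ 2 := fun y hy => by
          nlinarith [mul_nonneg (sub_nonneg.2 hy) (by linarith : 0 ≤ y + a - 2 * u), sq_nonneg u]
        have h1 := key x hx
        have h2 := key x' hx'
        rw [div_pow, div_pow, ← add_div, div_mul_eq_mul_div, ← add_div, ← neg_div, div_div,
          div_le_div_iff₀ (by positivity) (by positivity)]
        have : 0 < h ^ 2 := by positivity
        nlinarith
    _ = _ := by
        rw [integral_const_mul, integral_exp_mul_Iic hc]
        simp only [mul_zero, Real.exp_zero]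
        field_simp
        norm_num

lemma gaussDensity_neg (t : ℝ) : gaussDensity (-t) = gaussDensity t := by
  simp [gaussDensity]

/-- The right tail, reduced to the left one by the reflection `u ↦ 1 - u`. -/
lemma tail_le' {a h x x' : ℝ} (ha : 0 < a) (hh : 0 < h) (hx : x ≤ 1 - a) (hx' : x' ≤ 1 - a) :
    ∫ u in Ioi (1 : ℝ), gaussDensity ((u - x) / h) * gaussDensity ((u - x') / h) ≤
      h ^ 2 / (4 * Real.pi * a) * Real.exp (-a ^ 2 / h ^ 2) := by
  refine le_of_eq_of_le ?_
    (tail_le (x := 1 - x) (x' := 1 - x') ha hh (by linarith) (by linarith))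
  have e : ∀ u y : ℝ, gaussDensity ((u - (1 - y)) / h) = gaussDensity ((1 - u - y) / h) := by
    intro u y
    rw [← gaussDensity_neg]
    congr 1
    ring
  simp_rw [e]
  have key := (Measure.measurePreserving_sub_left (volume : Measure ℝ) 1).setIntegral_preimage_emb
    (MeasurableEquiv.subLeft (1 : ℝ)).measurableEmbedding
    (fun u => gaussDensity ((u - x) / h) * gaussDensity ((u - x') / h)) (Ioi 1)
  rw [integral_Iic_eq_integral_Iio, ← key]
  simp

lemma integral_gaussDensity_eq {h : ℝ} (hh : 0 < h) (x : ℝ) :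
    ∫ u in (0 : ℝ)..1, gaussDensity ((u - x) / h) = h * Ikde h x := by
  simp_rw [sub_div]
  rw [intervalIntegral.integral_comp_div_sub _ hh.ne', Ikde, smul_eq_mul]
  simp [sub_div]

/-- Covariance approximation for the kernel density estimator
(from the proof of Lemma 3.1). -/
theorem kde_covariance_approximation (a h : ℝ) (ha : a ∈ Set.Ioc 0 (1/4 : ℝ))
    (hh : h ∈ Set.Ioc 0 (1 : ℝ)) (x x' : ℝ)
    (hx : x ∈ Set.Icc a (1 - a)) (hx' : x' ∈ Set.Icc a (1 - a)) :
    |Ckde h x x'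
        - 1 / (2 * Real.sqrt Real.pi) * Real.exp (-(x - x') ^ 2 / (4 * h ^ 2))
        + h * Ikde h x * Ikde h x'| ≤
      h / (2 * Real.pi * a) * Real.exp (-a ^ 2 / h ^ 2) := by
  obtain ⟨ha, -⟩ := ha
  obtain ⟨hh, -⟩ := hh
  have hint := integrable_gaussDensity_mul hh x x'
  have hsplit := intervalIntegral.integral_Iic_add_Ioi (b := 0) hint.integrableOn hint.integrableOn
  have hsplit1 := intervalIntegral.integral_interval_add_Ioi (a := 0) (b := 1)
    hint.integrableOn hint.integrableOn
  rw [integral_gaussDensity_mul hh, ← hsplit1] at hsplit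
  have hL := tail_le ha hh hx.1 hx'.1
  have hR := tail_le' ha hh hx.2 hx'.2
  have hL0 : 0 ≤ ∫ u in Iic (0 : ℝ), gaussDensity ((u - x) / h) * gaussDensity ((u - x') / h) :=
    integral_nonneg fun u => gaussDensity_mul_nonneg _ _
  have hR0 : 0 ≤ ∫ u in Ioi (1 : ℝ), gaussDensity ((u - x) / h) * gaussDensity ((u - x') / h) :=
    integral_nonneg fun u => gaussDensity_mul_nonneg _ _
  rw [Ckde, integral_gaussDensity_eq hh, integral_gaussDensity_eq hh]
  set L := ∫ u in Iic (0 : ℝ), gaussDensity ((u - x) / h) * gaussDensity ((u - x') / h)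
  set M := ∫ u in (0 : ℝ)..1, gaussDensity ((u - x) / h) * gaussDensity ((u - x') / h)
  set R := ∫ u in Ioi (1 : ℝ), gaussDensity ((u - x) / h) * gaussDensity ((u - x') / h)
  set G := 1 / (2 * Real.sqrt Real.pi) * Real.exp (-(x - x') ^ 2 / (4 * h ^ 2))
  have hdiff : 1 / h * M - 1 / h * (h * Ikde h x) * (h * Ikde h x') - G
      + h * Ikde h x * Ikde h x' = -((L + R) / h) := by
    field_simp
    linear_combination hsplit
  rw [hdiff, abs_neg, abs_of_nonneg (by positivity), div_le_iff₀ hh]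
  calc L + R ≤ 2 * (h ^ 2 / (4 * Real.pi * a) * Real.exp (-a ^ 2 / h ^ 2)) := by linarith
    _ = _ := by
      field_simp
      norm_num
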